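/- Under the BARSS mixture setup described in the context, the ergodic capacity C_erg = Σ_{k=1}^K p_k* ∫₀^∞ E[ log(1 + P_k·H_k·G_k(r)/(N₀ + I_{k,r}/PG)) ]·f_k(r) dr satisfies Σ_{k=1}^K p_k* ∫₀^∞ ( ∫₀^∞ E[V̂_k⁻(H_k,τ,r)] dτ )·f_k(r) dr ≤ C_erg ≤ Σ_{k=1}^K p_k* ∫₀^∞ ( ∫₀^∞ E[V̂_k⁺(H_k,τ,r)] dτ )·f_k(r) dr, where all integrals and expectations are taken in the extended nonnegative reals. -/

import Mathlib

open MeasureTheory ProbabilityTheory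
open scoped ProbabilityTheory ENNReal

/-- The standard normal cumulative distribution function. -/
noncomputable def stdNormalCDF (x : ℝ) : ℝ :=
  (Real.sqrt (2 * Real.pi))⁻¹ * ∫ t in Set.Iic x, Real.exp (-(t ^ 2) / 2)

/-- The Berry–Esseen multiplicative function `c(x) = min{0.4785, 31.935/(1+|x|³)}`. -/
noncomputable def berryC (x : ℝ) : ℝ := min 0.4785 (31.935 / (1 + |x| ^ 3))

/-!
By the layer-cake formula a nonnegative random rate `R` has mean `∫ P(R ≥ τ) dτ` over `τ > 0`. For
fixed fading `h`, the rate reaches `τ` exactly when the interference stays below a threshold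
`T(h, τ)`. Since fading and interference are independent, `P(R ≥ τ)` is therefore the average over
`h` of the interference distribution function at `T(h, τ)`, and pointwise bounds on that
distribution function pass to the capacity. The threshold is negative exactly when noise alone
rules out the rate `τ`; as interference is nonnegative, the upper bound may be cut to zero there.
-/

theorem measure_prodMk_mem_of_indepFun {Ω α β : Type*} [MeasurableSpace Ω] [MeasurableSpace α]
    [MeasurableSpace β] {ν : Measure Ω} [IsFiniteMeasure ν] {X : Ω → α} {Y : Ω → β}
    (hX : AEMeasurable X ν) (hY : AEMeasurable Y ν) (hXY : IndepFun X Y ν)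
    {S : Set (α × β)} (hS : MeasurableSet S) :
    ν {ω | (X ω, Y ω) ∈ S} = ∫⁻ ω, ν {ω' | (X ω, Y ω') ∈ S} ∂ν :=
  calc ν {ω | (X ω, Y ω) ∈ S}
      = ν.map (fun ω => (X ω, Y ω)) S := (Measure.map_apply_of_aemeasurable (hX.prodMk hY) hS).symm
    _ = ((ν.map X).prod (ν.map Y)) S := by
        rw [(indepFun_iff_map_prod_eq_prod_map_map hX hY).1 hXY]
    _ = ∫⁻ x, ν.map Y (Prod.mk x ⁻¹' S) ∂ν.map X := Measure.prod_apply hS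
    _ = ∫⁻ ω, ν.map Y (Prod.mk (X ω) ⁻¹' S) ∂ν :=
        lintegral_map' (measurable_measure_prodMk_left hS).aemeasurable hX
    _ = ∫⁻ ω, ν {ω' | (X ω, Y ω') ∈ S} ∂ν := lintegral_congr fun _ =>
        Measure.map_apply_of_aemeasurable hY (measurable_prodMk_left hS)

/-- The rate `log (1 + SINR)` of a link with transmit power `p`, path loss `g`, noise power `N`,
processing gain `q`, fading `h` and interference `i`. -/
noncomputable def linkRate (p g N q h i : ℝ) : ℝ :=
  Real.log (1 + p * h * g / (N + i / q))

/-- The largest interference under which a link with fading `h` still has rate at least `τ`. The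
formula is the numerator of the paper's `ζ` before centering by the mean interference. -/
noncomputable def interferenceThreshold (p g N q h τ : ℝ) : ℝ :=
  p * (h * g / (Real.exp τ - 1) - N / p) * q

/-- The paper's `V̂⁻`: a lower bound for the probability that a link with fading `h` has rate at
least `τ`, when `F` approximates the interference distribution function with pointwise error `ε`. -/
noncomputable def coverageLower (p g N q : ℝ) (F ε : ℝ → ℝ) (h τ : ℝ) : ℝ :=
  if (Real.exp τ - 1) * N / (p * g) ≤ h then
    max 0 (F (interferenceThreshold p g N q h τ) - ε (interferenceThreshold p g N q h τ)) else 0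

/-- The paper's `V̂⁺`: the upper counterpart of `coverageLower`. -/
noncomputable def coverageUpper (p g N q : ℝ) (F ε : ℝ → ℝ) (h τ : ℝ) : ℝ :=
  if (Real.exp τ - 1) * N / (p * g) ≤ h then
    min 1 (F (interferenceThreshold p g N q h τ) + ε (interferenceThreshold p g N q h τ)) else 0

section Link

variable {p g N q h i τ : ℝ}

theorem linkRate_nonneg (hp : 0 ≤ p) (hg : 0 ≤ g) (hh : 0 ≤ h) (hD : 0 ≤ N + i / q) :
    0 ≤ linkRate p g N q h i :=
  Real.log_nonneg (le_add_of_nonneg_right (by positivity))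

theorem le_linkRate_iff (hp : 0 < p) (hg : 0 ≤ g) (hq : 0 < q) (hh : 0 ≤ h)
    (hD : 0 < N + i / q) (hτ : 0 < τ) :
    τ ≤ linkRate p g N q h i ↔ i ≤ interferenceThreshold p g N q h τ := by
  have hexp : 0 < Real.exp τ - 1 := sub_pos.2 (Real.one_lt_exp_iff.2 hτ)
  have hthreshold : interferenceThreshold p g N q h τ =
      (p * h * g / (Real.exp τ - 1) - N) * q := by
    unfold interferenceThreshold
    field_simp
  rw [linkRate, Real.le_log_iff_exp_le (by positivity), ← sub_le_iff_le_add', le_div_iff₀ hD,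
    hthreshold, ← div_le_iff₀ hq, le_sub_iff_add_le', le_div_iff₀ hexp, mul_comm]

theorem interferenceThreshold_neg (hp : 0 < p) (hg : 0 < g) (hq : 0 < q) (hτ : 0 < τ)
    (hh : h < (Real.exp τ - 1) * N / (p * g)) : interferenceThreshold p g N q h τ < 0 := by
  have hexp : 0 < Real.exp τ - 1 := sub_pos.2 (Real.one_lt_exp_iff.2 hτ)
  have hnoise : h * g / (Real.exp τ - 1) < N / p := by
    rw [lt_div_iff₀ (by positivity)] at hh
    rw [div_lt_div_iff₀ hexp hp]
    linarith
  exact mul_neg_of_neg_of_pos (mul_neg_of_pos_of_neg hp (sub_neg.2 hnoise)) hq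

variable {Ω : Type*} [MeasurableSpace Ω] {ν : Measure Ω} {F ε : ℝ → ℝ} {H I : Ω → ℝ}

theorem ofReal_coverageLower_le
    (hF : ∀ y, |ν.real {ω | I ω ≤ y} - F y| ≤ ε y) (h τ : ℝ) :
    ENNReal.ofReal (coverageLower p g N q F ε h τ) ≤
      ν {ω | I ω ≤ interferenceThreshold p g N q h τ} := by
  refine ENNReal.ofReal_le_of_le_toReal ?_
  unfold coverageLower
  split_ifs
  · exact max_le measureReal_nonneg (sub_le_comm.1 (abs_sub_le_iff.1 (hF _)).2)
  · exact measureReal_nonneg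

theorem measure_le_ofReal_coverageUpper [IsProbabilityMeasure ν] (hp : 0 < p) (hg : 0 < g)
    (hq : 0 < q) (hI : 0 ≤ᵐ[ν] I) (hF : ∀ y, |ν.real {ω | I ω ≤ y} - F y| ≤ ε y) (h : ℝ)
    (hτ : 0 < τ) :
    ν {ω | I ω ≤ interferenceThreshold p g N q h τ} ≤
      ENNReal.ofReal (coverageUpper p g N q F ε h τ) := by
  unfold coverageUpper
  split_ifs with hh
  · rw [← ofReal_measureReal]
    exact ENNReal.ofReal_le_ofReal
      (le_min measureReal_le_one (sub_le_iff_le_add'.1 (abs_sub_le_iff.1 (hF _)).1))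
  · have hneg := interferenceThreshold_neg hp hg hq hτ (not_le.1 hh)
    rw [ENNReal.ofReal_zero]
    exact (measure_eq_zero_iff_ae_notMem.2
      (hI.mono fun ω hω => not_le.2 (hneg.trans_le hω))).le

theorem lintegral_linkRate_eq [IsFiniteMeasure ν] (hp : 0 < p) (hg : 0 ≤ g) (hq : 0 < q)
    (hH : AEMeasurable H ν) (hI : AEMeasurable I ν) (hHnn : 0 ≤ᵐ[ν] H)
    (hHI : IndepFun H I ν) (hD : ∀ᵐ ω ∂ν, 0 < N + I ω / q) :
    ∫⁻ ω, ENNReal.ofReal (linkRate p g N q (H ω) (I ω)) ∂ν =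
      ∫⁻ τ in Set.Ioi 0, ∫⁻ ω, ν {ω' | I ω' ≤ interferenceThreshold p g N q (H ω) τ} ∂ν := by
  have hrate_nonneg : 0 ≤ᵐ[ν] fun ω => linkRate p g N q (H ω) (I ω) := by
    filter_upwards [hHnn, hD] with ω hh hd using linkRate_nonneg hp.le hg hh hd.le
  have hrate_meas : AEMeasurable (fun ω => linkRate p g N q (H ω) (I ω)) ν := by
    unfold linkRate
    fun_prop
  rw [lintegral_eq_lintegral_meas_le ν hrate_nonneg hrate_meas]
  refine setLIntegral_congr_fun measurableSet_Ioi fun τ hτ => ?_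
  have hS : MeasurableSet {x : ℝ × ℝ | x.2 ≤ interferenceThreshold p g N q x.1 τ} :=
    measurableSet_le measurable_snd (by unfold interferenceThreshold; fun_prop)
  calc ν {ω | τ ≤ linkRate p g N q (H ω) (I ω)}
      = ν {ω | I ω ≤ interferenceThreshold p g N q (H ω) τ} := by
        refine measure_congr ?_
        filter_upwards [hHnn, hD] with ω hh hd
        exact propext (le_linkRate_iff hp hg hq hh hd hτ)
    _ = ∫⁻ ω, ν {ω' | I ω' ≤ interferenceThreshold p g N q (H ω) τ} ∂ν :=
        measure_prodMk_mem_of_indepFun hH hI hHI hS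

theorem lintegral_coverageLower_le_lintegral_linkRate [IsFiniteMeasure ν] (hp : 0 < p)
    (hg : 0 ≤ g) (hq : 0 < q) (hH : AEMeasurable H ν) (hI : AEMeasurable I ν)
    (hHnn : 0 ≤ᵐ[ν] H) (hHI : IndepFun H I ν) (hD : ∀ᵐ ω ∂ν, 0 < N + I ω / q)
    (hF : ∀ y, |ν.real {ω | I ω ≤ y} - F y| ≤ ε y) :
    ∫⁻ τ in Set.Ioi 0, ∫⁻ ω, ENNReal.ofReal (coverageLower p g N q F ε (H ω) τ) ∂ν ≤
      ∫⁻ ω, ENNReal.ofReal (linkRate p g N q (H ω) (I ω)) ∂ν := by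
  rw [lintegral_linkRate_eq hp hg hq hH hI hHnn hHI hD]
  exact lintegral_mono fun τ => lintegral_mono fun ω => ofReal_coverageLower_le hF (H ω) τ

theorem lintegral_linkRate_le_lintegral_coverageUpper [IsProbabilityMeasure ν] (hp : 0 < p)
    (hg : 0 < g) (hq : 0 < q) (hH : AEMeasurable H ν) (hI : AEMeasurable I ν)
    (hHnn : 0 ≤ᵐ[ν] H) (hInn : 0 ≤ᵐ[ν] I)
    (hHI : IndepFun H I ν) (hD : ∀ᵐ ω ∂ν, 0 < N + I ω / q)
    (hF : ∀ y, |ν.real {ω | I ω ≤ y} - F y| ≤ ε y) :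
    ∫⁻ ω, ENNReal.ofReal (linkRate p g N q (H ω) (I ω)) ∂ν ≤
      ∫⁻ τ in Set.Ioi 0, ∫⁻ ω, ENNReal.ofReal (coverageUpper p g N q F ε (H ω) τ) ∂ν := by
  rw [lintegral_linkRate_eq hp hg.le hq hH hI hHnn hHI hD]
  exact setLIntegral_mono' measurableSet_Ioi fun τ hτ => lintegral_mono fun ω =>
    measure_le_ofReal_coverageUpper hp hg hq hInn hF (H ω) hτ

end Link

/-- The average of `φ k r` over tiers `k` with weights `w k` and connection distances `r ≥ 0` with
densities `f k`; negative weights and densities count as `0`. -/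
noncomputable def tierAverage {ι : Type*} [Fintype ι] (w : ι → ℝ) (f : ι → ℝ → ℝ)
    (φ : ι → ℝ → ℝ≥0∞) : ℝ≥0∞ :=
  ∑ k, ENNReal.ofReal (w k) * ∫⁻ r in Set.Ici 0, φ k r * ENNReal.ofReal (f k r)

theorem tierAverage_mono {ι : Type*} [Fintype ι] {w : ι → ℝ} {f : ι → ℝ → ℝ}
    {φ ψ : ι → ℝ → ℝ≥0∞} (h : ∀ k, ∀ r, 0 ≤ r → φ k r ≤ ψ k r) :
    tierAverage w f φ ≤ tierAverage w f ψ := by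
  refine Finset.sum_le_sum fun k _ => mul_le_mul_right ?_ _
  exact setLIntegral_mono' measurableSet_Ici fun r hr => mul_le_mul_left (h k r hr) _

/-- The Gaussian approximation is the case `F k r y = Ψ ((y - μ k r) / σ k r)`,
`ε k r y = Ξ k r * c ((y - μ k r) / σ k r)`. -/
theorem barss_ergodic_capacity_bounds_general {Ω ι : Type*} [MeasurableSpace Ω] {ν : Measure Ω}
    [IsProbabilityMeasure ν] [Fintype ι] {P : ι → ℝ} (hP : ∀ k, 0 < P k)
    {G : ι → ℝ → ℝ} (hG : ∀ k, ∀ r, 0 ≤ r → 0 < G k r) {N₀ PG : ℝ} (hPG : 0 < PG)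
    (w : ι → ℝ) (f : ι → ℝ → ℝ) {H I : ι → ℝ → Ω → ℝ}
    (hH : ∀ k, ∀ r, 0 ≤ r → AEMeasurable (H k r) ν)
    (hI : ∀ k, ∀ r, 0 ≤ r → AEMeasurable (I k r) ν)
    (hHnn : ∀ k, ∀ r, 0 ≤ r → 0 ≤ᵐ[ν] H k r) (hInn : ∀ k, ∀ r, 0 ≤ r → 0 ≤ᵐ[ν] I k r)
    (hindep : ∀ k, ∀ r, 0 ≤ r → IndepFun (H k r) (I k r) ν)
    (hpos : ∀ k, ∀ r, 0 ≤ r → ∀ᵐ ω ∂ν, 0 < N₀ + I k r ω / PG)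
    {F ε : ι → ℝ → ℝ → ℝ}
    (hF : ∀ k, ∀ r, 0 ≤ r → ∀ y, |ν.real {ω | I k r ω ≤ y} - F k r y| ≤ ε k r y) :
    tierAverage w f (fun k r => ∫⁻ τ in Set.Ioi 0, ∫⁻ ω,
        ENNReal.ofReal (coverageLower (P k) (G k r) N₀ PG (F k r) (ε k r) (H k r ω) τ) ∂ν) ≤
      tierAverage w f (fun k r =>
        ∫⁻ ω, ENNReal.ofReal (linkRate (P k) (G k r) N₀ PG (H k r ω) (I k r ω)) ∂ν) ∧
    tierAverage w f (fun k r =>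
        ∫⁻ ω, ENNReal.ofReal (linkRate (P k) (G k r) N₀ PG (H k r ω) (I k r ω)) ∂ν) ≤
      tierAverage w f (fun k r => ∫⁻ τ in Set.Ioi 0, ∫⁻ ω,
        ENNReal.ofReal (coverageUpper (P k) (G k r) N₀ PG (F k r) (ε k r) (H k r ω) τ) ∂ν) :=
  ⟨tierAverage_mono fun k r hr => lintegral_coverageLower_le_lintegral_linkRate (hP k)
      (hG k r hr).le hPG (hH k r hr) (hI k r hr) (hHnn k r hr) (hindep k r hr) (hpos k r hr)
      (hF k r hr),
    tierAverage_mono fun k r hr => lintegral_linkRate_le_lintegral_coverageUpper (hP k)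
      (hG k r hr) hPG (hH k r hr) (hI k r hr) (hHnn k r hr) (hInn k r hr) (hindep k r hr)
      (hpos k r hr) (hF k r hr)⟩

/-- Theorem 8: bounds on the ergodic capacity under the BARSS association policy
(mixture over tiers and connection distances); all integrals and expectations are
taken in the extended nonnegative reals. -/
theorem barss_ergodic_capacity_bounds
    {Ω : Type*} [MeasureSpace Ω] [IsProbabilityMeasure (ℙ : Measure Ω)]
    (K : ℕ) (hK : 1 ≤ K)
    (P : Fin K → ℝ) (hP : ∀ k, 0 < P k)
    (G : Fin K → ℝ → ℝ) (hGmeas : ∀ k, Measurable (G k))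
    (hGpos : ∀ k, ∀ r : ℝ, 0 ≤ r → 0 < G k r)
    (N₀ PG : ℝ) (hN₀ : 0 ≤ N₀) (hPG : 1 ≤ PG)
    (pstar : Fin K → ℝ) (hpstar : ∀ k, 0 ≤ pstar k) (hpsum : ∑ k, pstar k = 1)
    (f : Fin K → ℝ → ℝ) (hfmeas : ∀ k, Measurable (f k))
    (hfnn : ∀ k r, 0 ≤ f k r) (hfint : ∀ k, ∫ r in Set.Ici (0 : ℝ), f k r = 1)
    (H : Fin K → Ω → ℝ) (hHmeas : ∀ k, Measurable (H k)) (hHnn : ∀ k ω, 0 ≤ H k ω)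
    (I : Fin K → ℝ → Ω → ℝ)
    (hImeas : ∀ k, Measurable (Function.uncurry (I k)))
    (hInn : ∀ k, ∀ r : ℝ, 0 ≤ r → ∀ ω, 0 ≤ I k r ω)
    (hindep : ∀ k, ∀ r : ℝ, 0 ≤ r → IndepFun (H k) (I k r) ℙ)
    (hI1 : ∀ k, ∀ r : ℝ, 0 ≤ r → Integrable (I k r) ℙ)
    (hI2 : ∀ k, ∀ r : ℝ, 0 ≤ r → Integrable (fun ω => (I k r ω) ^ 2) ℙ)
    (μ σ Ξ : Fin K → ℝ → ℝ)
    (hμmeas : ∀ k, Measurable (μ k)) (hσmeas : ∀ k, Measurable (σ k))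
    (hΞmeas : ∀ k, Measurable (Ξ k))
    (hμ : ∀ k, ∀ r : ℝ, 0 ≤ r → μ k r = ∫ ω, I k r ω)
    (hσ : ∀ k, ∀ r : ℝ, 0 ≤ r → (σ k r) ^ 2 = ∫ ω, (I k r ω - μ k r) ^ 2)
    (hσpos : ∀ k, ∀ r : ℝ, 0 ≤ r → 0 < σ k r)
    (hΞnn : ∀ k, ∀ r : ℝ, 0 ≤ r → 0 ≤ Ξ k r)
    (hpos : ∀ k, ∀ r : ℝ, 0 ≤ r → ∀ᵐ ω ∂(ℙ : Measure Ω), 0 < N₀ + I k r ω / PG)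
    (hGauss : ∀ k, ∀ r : ℝ, 0 ≤ r → ∀ x : ℝ,
      |(ℙ {ω | (I k r ω - μ k r) / σ k r ≤ x}).toReal - stdNormalCDF x| ≤
        Ξ k r * berryC x)
    (ζ Vp Vm : Fin K → ℝ → ℝ → ℝ → ℝ)
    (hζ : ∀ k h τ r, ζ k h τ r =
      (P k * (h * G k r / (Real.exp τ - 1) - N₀ / P k) * PG - μ k r) / σ k r)
    (hVp : ∀ k h τ r, Vp k h τ r =
      if (Real.exp τ - 1) * N₀ / (P k * G k r) ≤ h then
        min 1 (stdNormalCDF (ζ k h τ r) + Ξ k r * berryC (ζ k h τ r)) else 0)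
    (hVm : ∀ k h τ r, Vm k h τ r =
      if (Real.exp τ - 1) * N₀ / (P k * G k r) ≤ h then
        max 0 (stdNormalCDF (ζ k h τ r) - Ξ k r * berryC (ζ k h τ r)) else 0)
    (Cerg : ℝ≥0∞)
    (hCerg : Cerg = ∑ k, ENNReal.ofReal (pstar k) *
      ∫⁻ r in Set.Ici (0 : ℝ),
        (∫⁻ ω, ENNReal.ofReal
            (Real.log (1 + P k * H k ω * G k r / (N₀ + I k r ω / PG)))) *
          ENNReal.ofReal (f k r)) :
    (∑ k, ENNReal.ofReal (pstar k) *
        ∫⁻ r in Set.Ici (0 : ℝ),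
          (∫⁻ τ in Set.Ioi (0 : ℝ), ∫⁻ ω, ENNReal.ofReal (Vm k (H k ω) τ r)) *
            ENNReal.ofReal (f k r)) ≤ Cerg ∧
      Cerg ≤ ∑ k, ENNReal.ofReal (pstar k) *
        ∫⁻ r in Set.Ici (0 : ℝ),
          (∫⁻ τ in Set.Ioi (0 : ℝ), ∫⁻ ω, ENNReal.ofReal (Vp k (H k ω) τ r)) *
            ENNReal.ofReal (f k r) := by
  have happrox (k) (r) (hr : 0 ≤ r) (y) : |(ℙ : Measure Ω).real {ω | I k r ω ≤ y} -
      stdNormalCDF ((y - μ k r) / σ k r)| ≤ Ξ k r * berryC ((y - μ k r) / σ k r) := by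
    simpa only [measureReal_def, div_le_div_iff_of_pos_right (hσpos k r hr),
      sub_le_sub_iff_right] using hGauss k r hr ((y - μ k r) / σ k r)
  simp only [hCerg, hVm, hVp, hζ]
  exact barss_ergodic_capacity_bounds_general (H := fun k _ => H k) (I := I)
    (F := fun k r y => stdNormalCDF ((y - μ k r) / σ k r))
    (ε := fun k r y => Ξ k r * berryC ((y - μ k r) / σ k r))
    hP hGpos (zero_lt_one.trans_le hPG) pstar f (fun k _ _ => (hHmeas k).aemeasurable)
    (fun k _ _ => (hImeas k).of_uncurry_left.aemeasurable) (fun k _ _ => ae_of_all _ (hHnn k))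
    (fun k r hr => ae_of_all _ (hInn k r hr)) hindep hpos happrox
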